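/- arXiv:math/0411516 — 2 statements merged into one kernel-verified Lean document; each statement's English description precedes it below -/
import Mathlib

section
/- Let V be a real vector space, F ⊆ V a convex set, x_1, …, x_N points of a set X, and K a linear map from V to real-valued functions on X such that K(μ)(x_i) > 0 for every μ ∈ F and every i. Suppose μ̂ ∈ F maximizes the log-likelihood μ ↦ (1/N) ∑_{i=1}^N log K(μ)(x_i) over F. Then for every μ ∈ F, (1/N) ∑_{i=1}^N K(μ)(x_i)/K(μ̂)(x_i) ≤ 1. -/
open MeasureTheory

/-!
Write `ℓᵢ` for the linear functional `μ ↦ K(μ)(xᵢ)`. Moving from `μ̂` towards another point `μ` of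
the class cannot increase the log-likelihood `∑ᵢ wᵢ log ℓᵢ(μ)`, so its directional derivative
`∑ᵢ wᵢ ℓᵢ(μ - μ̂) / ℓᵢ(μ̂)` at `μ̂` is at most zero. Only an initial piece of the segment
matters, and there each `ℓᵢ` stays positive by continuity.
-/

open Filter
open scoped Topology

section Line

variable {V : Type*} [AddCommGroup V] [Module ℝ V]

theorem hasLineDerivAt_nonpos_of_eventually_le {f : V → ℝ} {f' : ℝ} {a v : V}
    (hf : HasLineDerivAt ℝ f f' a v) (hle : ∀ᶠ t : ℝ in 𝓝[>] 0, f (a + t • v) ≤ f a) :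
    f' ≤ 0 := by
  refine le_of_tendsto hf.tendsto_slope_zero_right ?_
  filter_upwards [hle, self_mem_nhdsWithin] with t hft ht
  exact smul_nonpos_of_nonneg_of_nonpos (inv_nonneg.2 (le_of_lt ht)) (sub_nonpos.2 hft)

theorem eventually_add_smul_sub_mem_of_starConvex {s : Set V} {a b : V} (hs : StarConvex ℝ a s)
    (hb : b ∈ s) : ∀ᶠ t : ℝ in 𝓝[>] 0, a + t • (b - a) ∈ s := by
  filter_upwards [Ioc_mem_nhdsGT one_pos] with t ht
  exact hs.add_smul_sub_mem hb ht.1.le ht.2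

theorem hasLineDerivAt_linearMap {𝕜 E W : Type*} [NontriviallyNormedField 𝕜] [AddCommGroup E]
    [Module 𝕜 E] [NormedAddCommGroup W] [NormedSpace 𝕜 W] (ℓ : E →ₗ[𝕜] W) (a v : E) :
    HasLineDerivAt 𝕜 ℓ (ℓ v) a v := by
  simpa [HasLineDerivAt] using ((hasDerivAt_id (0 : 𝕜)).smul_const (ℓ v)).const_add (ℓ a)

theorem eventually_lt_linearMap_add_smul {ℓ : V →ₗ[ℝ] ℝ} {a : V} {c : ℝ} (ha : c < ℓ a) (v : V) :
    ∀ᶠ t : ℝ in 𝓝 0, c < ℓ (a + t • v) :=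
  (hasLineDerivAt_linearMap ℓ a v).continuousAt.eventually_const_lt (by simpa using ha)

theorem hasLineDerivAt_sum_mul_log {ι : Type*} [Fintype ι] (w : ι → ℝ) {ℓ : ι → V →ₗ[ℝ] ℝ} {a : V}
    (ha : ∀ i, ℓ i a ≠ 0) (v : V) :
    HasLineDerivAt ℝ (fun μ ↦ ∑ i, w i * Real.log (ℓ i μ)) (∑ i, w i * (ℓ i v / ℓ i a)) a v := by
  refine HasDerivAt.fun_sum fun i _ ↦ HasDerivAt.const_mul (w i) ?_
  simpa using HasDerivAt.log (hasLineDerivAt_linearMap (ℓ i) a v) (by simpa using ha i)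

end Line

theorem npml_first_order_condition_general {V ι : Type*} [AddCommGroup V] [Module ℝ V] [Fintype ι]
    (w : ι → ℝ) (ℓ : ι → V →ₗ[ℝ] ℝ) {F : Set V} {μhat : V} (hF : StarConvex ℝ μhat F)
    (hpos : ∀ i, 0 < ℓ i μhat)
    (hmax : IsMaxOn (fun μ ↦ ∑ i, w i * Real.log (ℓ i μ)) {μ ∈ F | ∀ i, 0 < ℓ i μ} μhat) :
    ∀ μ ∈ F, ∑ i, w i * (ℓ i μ / ℓ i μhat) ≤ ∑ i, w i := by
  intro μ hμ
  have hderiv := hasLineDerivAt_sum_mul_log w (fun i ↦ (hpos i).ne') (μ - μhat)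
  have hmem : ∀ᶠ t : ℝ in 𝓝[>] 0, μhat + t • (μ - μhat) ∈ {μ ∈ F | ∀ i, 0 < ℓ i μ} :=
    (eventually_add_smul_sub_mem_of_starConvex hF hμ).and <| nhdsWithin_le_nhds <|
      eventually_all.2 fun i ↦ eventually_lt_linearMap_add_smul (hpos i) (μ - μhat)
  have hnonpos : ∑ i, w i * (ℓ i (μ - μhat) / ℓ i μhat) ≤ 0 :=
    hasLineDerivAt_nonpos_of_eventually_le hderiv (hmem.mono fun _ ht ↦ hmax ht)
  have hexpand (i : ι) : w i * (ℓ i (μ - μhat) / ℓ i μhat) = w i * (ℓ i μ / ℓ i μhat) - w i := by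
    rw [map_sub, sub_div, div_self (hpos i).ne', mul_sub_one]
  simpa only [hexpand, Finset.sum_sub_distrib, sub_nonpos] using hnonpos

/-- if `μ̂` maximizes the empirical log-likelihood
`μ ↦ (1/N) ∑ᵢ log K(μ)(xᵢ)` over a convex class `F`, then the first-order condition
`(1/N) ∑ᵢ K(μ)(xᵢ)/K(μ̂)(xᵢ) ≤ 1` holds for every `μ ∈ F`. -/
theorem npml_first_order_condition
    {V X : Type*} [AddCommGroup V] [Module ℝ V]
    (F : Set V) (hF : Convex ℝ F)
    (N : ℕ) (hN : 0 < N) (x : Fin N → X)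
    (K : V →ₗ[ℝ] (X → ℝ))
    (hpos : ∀ μ ∈ F, ∀ i, 0 < K μ (x i))
    (μhat : V) (hμhat : μhat ∈ F)
    (hmax : ∀ μ ∈ F,
      (1 / N : ℝ) * ∑ i, Real.log (K μ (x i)) ≤
        (1 / N : ℝ) * ∑ i, Real.log (K μhat (x i))) :
    ∀ μ ∈ F, (1 / N : ℝ) * ∑ i, K μ (x i) / K μhat (x i) ≤ 1 := by
  simpa [Finset.mul_sum, hN.ne'] using npml_first_order_condition_general (fun _ ↦ (1 / N : ℝ))
    (fun i ↦ LinearMap.proj (x i) ∘ₗ K) (hF.starConvex hμhat) (hpos μhat hμhat)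
    fun μ hμ ↦ by simpa [Finset.mul_sum] using hmax μ hμ.1
end

section
/- Let V be a real vector space, F ⊆ V a convex set, x_1, …, x_N points of a set X, and K a linear map from V to real-valued functions on X such that K(μ)(x_i) > 0 for every μ ∈ F and every i. Suppose μ̂ ∈ F satisfies (1/N) ∑_{i=1}^N K(μ)(x_i)/K(μ̂)(x_i) ≤ 1 for every μ ∈ F. Then μ̂ maximizes the log-likelihood over F: for every μ ∈ F, (1/N) ∑_{i=1}^N log K(μ)(x_i) ≤ (1/N) ∑_{i=1}^N log K(μ̂)(x_i). -/
theorem log_sub_log_le_div_sub_one {a b : ℝ} (ha : 0 < a) (hb : 0 < b) :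
    Real.log a - Real.log b ≤ a / b - 1 := by
  rw [← Real.log_div ha.ne' hb.ne']
  exact Real.log_le_sub_one_of_pos (div_pos ha hb)

theorem sum_mul_log_le_sum_mul_log_of_sum_mul_div_le {ι : Type*} {s : Finset ι} {w p q : ι → ℝ}
    (hw : ∀ i ∈ s, 0 ≤ w i) (hp : ∀ i ∈ s, 0 < p i) (hq : ∀ i ∈ s, 0 < q i)
    (hpq : ∑ i ∈ s, w i * (p i / q i) ≤ ∑ i ∈ s, w i) :
    ∑ i ∈ s, w i * Real.log (p i) ≤ ∑ i ∈ s, w i * Real.log (q i) := by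
  refine sub_nonpos.mp ?_
  calc ∑ i ∈ s, w i * Real.log (p i) - ∑ i ∈ s, w i * Real.log (q i)
      = ∑ i ∈ s, w i * (Real.log (p i) - Real.log (q i)) := by
        simp only [mul_sub, Finset.sum_sub_distrib]
    _ ≤ ∑ i ∈ s, w i * (p i / q i - 1) := Finset.sum_le_sum fun i hi =>
        mul_le_mul_of_nonneg_left (log_sub_log_le_div_sub_one (hp i hi) (hq i hi)) (hw i hi)
    _ = ∑ i ∈ s, w i * (p i / q i) - ∑ i ∈ s, w i := by
        simp only [mul_sub, mul_one, Finset.sum_sub_distrib]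
    _ ≤ 0 := sub_nonpos.mpr hpq

theorem first_order_condition_implies_npml_general {V X ι : Type*} {F : Set V} {s : Finset ι}
    {w : ι → ℝ} (hw : ∀ i ∈ s, 0 ≤ w i) {x : ι → X} {K : V → X → ℝ}
    (hpos : ∀ μ ∈ F, ∀ i ∈ s, 0 < K μ (x i)) {μhat : V} (hμhat : μhat ∈ F)
    (hfoc : ∀ μ ∈ F, ∑ i ∈ s, w i * (K μ (x i) / K μhat (x i)) ≤ ∑ i ∈ s, w i) :
    IsMaxOn (fun μ => ∑ i ∈ s, w i * Real.log (K μ (x i))) F μhat := fun μ hμ =>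
  sum_mul_log_le_sum_mul_log_of_sum_mul_div_le hw (hpos μ hμ) (hpos μhat hμhat) (hfoc μ hμ)

/-- if `μ̂` in a convex class `F` satisfies the first-order condition
`(1/N) ∑ᵢ K(μ)(xᵢ)/K(μ̂)(xᵢ) ≤ 1` for every `μ ∈ F`, then `μ̂` maximizes the empirical
log-likelihood `μ ↦ (1/N) ∑ᵢ log K(μ)(xᵢ)` over `F`. -/
theorem first_order_condition_implies_npml
    {V X : Type*} [AddCommGroup V] [Module ℝ V]
    (F : Set V) (hF : Convex ℝ F)
    (N : ℕ) (hN : 0 < N) (x : Fin N → X)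
    (K : V →ₗ[ℝ] (X → ℝ))
    (hpos : ∀ μ ∈ F, ∀ i, 0 < K μ (x i))
    (μhat : V) (hμhat : μhat ∈ F)
    (hfoc : ∀ μ ∈ F, (1 / N : ℝ) * ∑ i, K μ (x i) / K μhat (x i) ≤ 1) :
    ∀ μ ∈ F,
      (1 / N : ℝ) * ∑ i, Real.log (K μ (x i)) ≤
        (1 / N : ℝ) * ∑ i, Real.log (K μhat (x i)) := by
  have sum_weights : ∑ _i : Fin N, (1 / N : ℝ) = 1 := by simp [hN.ne']
  simp only [Finset.mul_sum] at hfoc ⊢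
  exact first_order_condition_implies_npml_general (fun _ _ => by positivity)
    (fun μ hμ i _ => hpos μ hμ i) hμhat (fun μ hμ => (hfoc μ hμ).trans_eq sum_weights.symm)
end
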